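/- Fix integers n ≥ 1 and d ≥ 1, and define φ : ℂ^{n+1} → ℂ by the absolutely convergent series φ(X) = Σ_{k=0}^∞ (n!(n-d+1)^k/(n+k)!) Σ_{α_0+⋯+α_n=k} (X^0)^{α_0} ⋯ (X^n)^{α_n}. Let λ : ℂ^{n+1} → ℂ be a linear map and define σ : ℂ^{n+1} → ℂ by σ(X) = (-(n-d+1)λ(X)/n + d)·φ(X) + (d/n)·Σ_{i=0}^n X^i ∂φ/∂X^i(X). Then σ(0) = d, the partial derivatives of σ at 0 are ∂σ/∂X^i(0) = -(n-d+1)λ(e_i)/n + d(n-d+1)/n (where e_i is the i-th standard basis vector), and consequently for every v = (v^0, …, v^n) ∈ ℂ^{n+1} with Σ_{i=0}^n v^i = 0 and λ(v) = κ one has -(n-d+1)^{n-1} d (κ + Σ_{i=0}^n v^i ∂σ/∂X^i(0)/σ(0)) = -(n-d+1)^{n-1} ((n+1)(d-1)/n) κ. -/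

import Mathlib

/-!
The degree-`k` term of `φ` is a multiple of the complete homogeneous symmetric polynomial `h_k`,
which is the diagonal of a continuous multilinear map whose norm grows at most geometrically in `k`.
So `φ` is entire, and its two lowest terms give `φ 0 = 1` and `dφ(0) = c / (n + 1) • ∑ i, dX i`.

The sum `∑ i, X i * ∂φ/∂X i` is `dφ(X) X`, whose derivative at the origin is again `dφ(0)`. Hence
`dσ(0) v = -c * λ v / n + d * (1 + 1 / n) * dφ(0) v`. On vectors of coordinate sum zero the second
term vanishes, and the Futaki invariant comes from the first one alone.
-/

open MvPolynomial (hsymm eval)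

section CompleteHomogeneous

variable {ι : Type*} {k : ℕ}

/-- The multiset of letters of a word of length `k`, as an element of the symmetric power. Words
are used to turn a monomial of degree `k` into a `k`-linear map. -/
def symOfWord (w : Fin k → ι) : Sym ι k :=
  Sym.mk (Finset.univ.val.map w) (by simp)

lemma symOfWord_surjective : Function.Surjective (symOfWord : (Fin k → ι) → Sym ι k) := by
  rintro ⟨⟨l⟩, rfl⟩
  exact ⟨l.get, Sym.ext ((Fin.univ_val_map l.get).trans (congrArg _ (List.ofFn_get l)))⟩

lemma card_sym_le_card_pow [Fintype ι] [DecidableEq ι] :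
    Fintype.card (Sym ι k) ≤ Fintype.card ι ^ k := by
  simpa using Fintype.card_le_of_surjective _ (symOfWord_surjective (ι := ι) (k := k))

lemma eval_hsymm {R : Type*} [CommSemiring R] [Fintype ι] [DecidableEq ι] (k : ℕ) (X : ι → R) :
    eval X (hsymm ι R k) = ∑ s : Sym ι k, ((s : Multiset ι).map X).prod := by
  simp [hsymm, map_multiset_prod]

lemma prod_map_eq_prod_univ_pow_count {M : Type*} [CommMonoid M] [Fintype ι] [DecidableEq ι]
    (f : ι → M) (s : Multiset ι) : (s.map f).prod = ∏ i, f i ^ s.count i := by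
  rw [Finset.prod_multiset_map_count]
  exact Finset.prod_subset (Finset.subset_univ _) fun i _ hi => by
    rw [Multiset.count_eq_zero.2 fun h => hi (Multiset.mem_toFinset.2 h), pow_zero]

lemma eval_hsymm_fin {R : Type*} [CommSemiring R] (m k : ℕ) (X : Fin m → R) :
    eval X (hsymm (Fin m) R k) =
      ∑ α ∈ Finset.Nat.antidiagonalTuple m k, ∏ i, X i ^ α i := by
  let _ : Fintype {α : Fin m → ℕ // ∑ i, α i = k} :=
    Fintype.subtype _ fun _ => Finset.Nat.mem_antidiagonalTuple
  calc eval X (hsymm (Fin m) R k)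
      = ∑ s : Sym (Fin m) k, ((s : Multiset (Fin m)).map X).prod := eval_hsymm k X
    _ = ∑ α : {α : Fin m → ℕ // ∑ i, α i = k}, ∏ i, X i ^ α.1 i :=
        Fintype.sum_equiv (Sym.equivNatSumOfFintype (Fin m) k) _ _ fun s => by
          simpa using prod_map_eq_prod_univ_pow_count X (s : Multiset (Fin m))
    _ = ∑ α ∈ Finset.Nat.antidiagonalTuple m k, ∏ i, X i ^ α i :=
        (Finset.sum_subtype _ (fun _ => Finset.Nat.mem_antidiagonalTuple)
          fun α : Fin m → ℕ => ∏ i, X i ^ α i).symm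

variable {𝕜 : Type*} [NontriviallyNormedField 𝕜]

/-- The `k`-linear map `(x₁, …, x_k) ↦ ∏ j, x_j (w j)`, whose diagonal is the monomial spelled by
the word `w`. -/
noncomputable def wordMultilinear (𝕜 : Type*) [NontriviallyNormedField 𝕜] (w : Fin k → ι) :
    ContinuousMultilinearMap 𝕜 (fun _ : Fin k => ι → 𝕜) 𝕜 :=
  (ContinuousMultilinearMap.mkPiAlgebra 𝕜 (Fin k) 𝕜).compContinuousLinearMap
    fun j => ContinuousLinearMap.proj (w j)

lemma wordMultilinear_apply (w : Fin k → ι) (x : Fin k → ι → 𝕜) :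
    wordMultilinear 𝕜 w x = ∏ j, x j (w j) := by
  simp [wordMultilinear]

lemma wordMultilinear_diag (w : Fin k → ι) (X : ι → 𝕜) :
    wordMultilinear 𝕜 w (fun _ => X) = ((symOfWord w : Multiset ι).map X).prod := by
  rw [wordMultilinear_apply]
  exact (congrArg Multiset.prod (Multiset.map_map X w Finset.univ.val)).symm

lemma norm_wordMultilinear_le_one [Fintype ι] (w : Fin k → ι) : ‖wordMultilinear 𝕜 w‖ ≤ 1 := by
  refine ContinuousMultilinearMap.opNorm_le_bound zero_le_one fun x => ?_
  rw [wordMultilinear_apply, norm_prod, one_mul]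
  exact Finset.prod_le_prod (fun _ _ => norm_nonneg _) fun j _ => norm_le_pi_norm (x j) (w j)

/-- A continuous `k`-linear map with diagonal `h_k`. It is not symmetric: each monomial is
represented by one arbitrarily chosen word. -/
noncomputable def hsymmMultilinear (ι 𝕜 : Type*) [NontriviallyNormedField 𝕜] [Fintype ι]
    [DecidableEq ι] (k : ℕ) : ContinuousMultilinearMap 𝕜 (fun _ : Fin k => ι → 𝕜) 𝕜 :=
  ∑ s : Sym ι k, wordMultilinear 𝕜 (Function.surjInv symOfWord_surjective s)

variable [Fintype ι] [DecidableEq ι]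

lemma hsymmMultilinear_diag (k : ℕ) (X : ι → 𝕜) :
    hsymmMultilinear ι 𝕜 k (fun _ => X) = eval X (hsymm ι 𝕜 k) := by
  simp [hsymmMultilinear, eval_hsymm, wordMultilinear_diag, Function.surjInv_eq]

lemma norm_hsymmMultilinear_le (k : ℕ) :
    ‖hsymmMultilinear ι 𝕜 k‖ ≤ (Fintype.card ι : ℝ) ^ k :=
  calc ‖hsymmMultilinear ι 𝕜 k‖
      ≤ ∑ _s : Sym ι k, (1 : ℝ) :=
        norm_sum_le_of_le _ fun _ _ => norm_wordMultilinear_le_one _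
    _ = Fintype.card (Sym ι k) := by simp
    _ ≤ (Fintype.card ι : ℝ) ^ k := mod_cast card_sym_le_card_pow

end CompleteHomogeneous

section HsymmSeries

variable {ι 𝕜 : Type*} [NontriviallyNormedField 𝕜] [Fintype ι] [DecidableEq ι] {a : ℕ → 𝕜}

/-- The formal power series `∑ k, a k * h_k` in the variables indexed by `ι`. -/
noncomputable def hsymmSeries (ι : Type*) {𝕜 : Type*} [NontriviallyNormedField 𝕜] [Fintype ι]
    [DecidableEq ι] (a : ℕ → 𝕜) : FormalMultilinearSeries 𝕜 (ι → 𝕜) 𝕜 :=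
  fun k => a k • hsymmMultilinear ι 𝕜 k

lemma hsymmSeries_diag (a : ℕ → 𝕜) (k : ℕ) (X : ι → 𝕜) :
    hsymmSeries ι a k (fun _ => X) = a k * eval X (hsymm ι 𝕜 k) := by
  simp [hsymmSeries, hsymmMultilinear_diag]

lemma radius_hsymmSeries_eq_top (ha : ∀ r : NNReal, Summable fun k => ‖a k‖ * (r : ℝ) ^ k) :
    (hsymmSeries ι a).radius = ⊤ := by
  refine FormalMultilinearSeries.radius_eq_top_of_summable_norm _ fun r => ?_
  refine (ha (Fintype.card ι * r)).of_nonneg_of_le (fun k => by positivity) fun k => ?_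
  calc ‖hsymmSeries ι a k‖ * (r : ℝ) ^ k
      ≤ ‖a k‖ * (Fintype.card ι : ℝ) ^ k * (r : ℝ) ^ k := by
        rw [hsymmSeries, norm_smul]
        gcongr
        exact norm_hsymmMultilinear_le k
    _ = ‖a k‖ * ((Fintype.card ι * r : NNReal) : ℝ) ^ k := by
        push_cast
        ring

lemma tsum_hsymm_apply_zero (a : ℕ → 𝕜) : ∑' k, a k * eval (0 : ι → 𝕜) (hsymm ι 𝕜 k) = a 0 := by
  have hhigher (k : ℕ) (hk : k ≠ 0) : eval (0 : ι → 𝕜) (hsymm ι 𝕜 k) = 0 := by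
    rw [eval_hsymm]
    simp [hk]
  rw [tsum_eq_single 0 fun k hk => by rw [hhigher k hk, mul_zero]]
  simp

variable [CompleteSpace 𝕜]

lemma hasFPowerSeriesOnBall_tsum_hsymm
    (ha : ∀ r : NNReal, Summable fun k => ‖a k‖ * (r : ℝ) ^ k) :
    HasFPowerSeriesOnBall (fun X : ι → 𝕜 => ∑' k, a k * eval X (hsymm ι 𝕜 k))
      (hsymmSeries ι a) 0 ⊤ := by
  have hsum : (hsymmSeries ι a).sum = fun X => ∑' k, a k * eval X (hsymm ι 𝕜 k) :=
    funext fun X => tsum_congr fun k => hsymmSeries_diag a k X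
  have hradius := radius_hsymmSeries_eq_top (ι := ι) ha
  have hball := (hsymmSeries ι a).hasFPowerSeriesOnBall (hradius ▸ ENNReal.zero_lt_top)
  rwa [hsum, hradius] at hball

lemma fderiv_tsum_hsymm_zero (ha : ∀ r : NNReal, Summable fun k => ‖a k‖ * (r : ℝ) ^ k)
    (v : ι → 𝕜) :
    fderiv 𝕜 (fun X : ι → 𝕜 => ∑' k, a k * eval X (hsymm ι 𝕜 k)) 0 v = a 1 * ∑ i, v i := by
  rw [(hasFPowerSeriesOnBall_tsum_hsymm ha).hasFPowerSeriesAt.fderiv_eq]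
  calc hsymmSeries ι a 1 (fun _ => v) = a 1 * eval v (hsymm ι 𝕜 1) := hsymmSeries_diag a 1 v
    _ = a 1 * ∑ i, v i := by simp

end HsymmSeries

section Euler

lemma hasFDerivAt_fderiv_apply_self_zero {𝕜 E F : Type*} [NontriviallyNormedField 𝕜]
    [NormedAddCommGroup E] [NormedSpace 𝕜 E] [NormedAddCommGroup F] [NormedSpace 𝕜 F] {f : E → F}
    (hf : DifferentiableAt 𝕜 (fderiv 𝕜 f) 0) :
    HasFDerivAt (fun x => fderiv 𝕜 f x x) (fderiv 𝕜 f 0) 0 := by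
  refine (hf.hasFDerivAt.clm_apply (hasFDerivAt_id 0)).congr_fderiv ?_
  ext
  simp

lemma sum_mul_map_single {ι R L : Type*} [Fintype ι] [DecidableEq ι] [CommSemiring R]
    [FunLike L (ι → R) R] [LinearMapClass L R (ι → R) R] (f : L) (v : ι → R) :
    ∑ i, v i * f (Pi.single i 1) = f v := by
  simp_rw [← smul_eq_mul, ← map_smul, ← map_sum, ← Pi.single_smul, smul_eq_mul, mul_one,
    Finset.univ_sum_single]

end Euler

section Futaki

variable {𝕜 ι : Type*} [RCLike 𝕜] [Fintype ι] [DecidableEq ι]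

/-- The function `φ` of equation (10), in variables indexed by any finite type and with the number
`n - d + 1` replaced by an arbitrary scalar `c`. -/
noncomputable def futakiPhi (n : ℕ) (c : 𝕜) (X : ι → 𝕜) : 𝕜 :=
  ∑' k : ℕ, (n.factorial * c ^ k / (n + k).factorial) * eval X (hsymm ι 𝕜 k)

/-- The function `σ` of equation (11) built from `futakiPhi`, with `c` and `d` independent
scalars. -/
noncomputable def futakiSigma (n : ℕ) (c d : 𝕜) (lam : (ι → 𝕜) →ₗ[𝕜] 𝕜) (X : ι → 𝕜) : 𝕜 :=
  (-(c * lam X) / n + d) * futakiPhi n c X +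
    d / n * ∑ i, X i * fderiv 𝕜 (futakiPhi n c) X (Pi.single i 1)

lemma futakiPhi_fin {m : ℕ} (n : ℕ) (c : 𝕜) :
    futakiPhi n c = fun X : Fin m → 𝕜 =>
      ∑' k : ℕ, (n.factorial * c ^ k / (n + k).factorial) *
        ∑ α ∈ Finset.Nat.antidiagonalTuple m k, ∏ i, X i ^ α i :=
  funext fun X => by simp only [futakiPhi, eval_hsymm_fin]

lemma norm_factorial_mul_pow_div_factorial_le (n k : ℕ) (c : 𝕜) :
    ‖(n.factorial * c ^ k / (n + k).factorial : 𝕜)‖ ≤ ‖c‖ ^ k / k.factorial := by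
  have hle : (n.factorial * k.factorial : ℝ) ≤ (n + k).factorial := mod_cast
    Nat.le_of_dvd (Nat.factorial_pos _) (Nat.factorial_mul_factorial_dvd_factorial_add n k)
  rw [norm_div, norm_mul, norm_pow, RCLike.norm_natCast, RCLike.norm_natCast,
    div_le_div_iff₀ (by positivity) (by positivity)]
  calc n.factorial * ‖c‖ ^ k * k.factorial = ‖c‖ ^ k * (n.factorial * k.factorial) := by ring
    _ ≤ ‖c‖ ^ k * (n + k).factorial := by gcongr

lemma summable_norm_futakiPhi_coeff (n : ℕ) (c : 𝕜) (r : NNReal) :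
    Summable fun k => ‖(n.factorial * c ^ k / (n + k).factorial : 𝕜)‖ * (r : ℝ) ^ k := by
  refine (Real.summable_pow_div_factorial (‖c‖ * r)).of_nonneg_of_le (fun k => by positivity)
    fun k => ?_
  calc _ ≤ ‖c‖ ^ k / k.factorial * (r : ℝ) ^ k := by
        gcongr
        exact norm_factorial_mul_pow_div_factorial_le n k c
    _ = (‖c‖ * r) ^ k / k.factorial := by ring

lemma analyticAt_futakiPhi_zero (n : ℕ) (c : 𝕜) :
    AnalyticAt 𝕜 (futakiPhi n c : (ι → 𝕜) → 𝕜) 0 :=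
  (hasFPowerSeriesOnBall_tsum_hsymm (summable_norm_futakiPhi_coeff n c)).analyticAt

lemma futakiPhi_zero (n : ℕ) (c : 𝕜) : futakiPhi n c (0 : ι → 𝕜) = 1 := by
  rw [futakiPhi, tsum_hsymm_apply_zero fun k => (n.factorial * c ^ k / (n + k).factorial : 𝕜)]
  simp [Nat.factorial_ne_zero]

lemma fderiv_futakiPhi_zero (n : ℕ) (c : 𝕜) (v : ι → 𝕜) :
    fderiv 𝕜 (futakiPhi n c) 0 v = c / (n + 1) * ∑ i, v i := by
  refine (fderiv_tsum_hsymm_zero (summable_norm_futakiPhi_coeff n c) v).trans ?_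
  have hfactorial : (n.factorial : 𝕜) ≠ 0 := mod_cast n.factorial_ne_zero
  rw [Nat.factorial_succ]
  push_cast
  field_simp

lemma futakiSigma_zero (n : ℕ) (c d : 𝕜) (lam : (ι → 𝕜) →ₗ[𝕜] 𝕜) :
    futakiSigma n c d lam 0 = d := by
  simp [futakiSigma, futakiPhi_zero]

lemma hasFDerivAt_futakiSigma_zero (n : ℕ) (c d : 𝕜) (lam : (ι → 𝕜) →ₗ[𝕜] 𝕜) :
    HasFDerivAt (futakiSigma n c d lam)
      (-(c / n) • lam.toContinuousLinearMap + (d + d / n) • fderiv 𝕜 (futakiPhi n c) 0) 0 := by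
  have hphi : AnalyticAt 𝕜 (futakiPhi n c : (ι → 𝕜) → 𝕜) 0 := analyticAt_futakiPhi_zero n c
  have heuler := hasFDerivAt_fderiv_apply_self_zero hphi.fderiv.differentiableAt
  have hlinear := (-(c / n) • lam.toContinuousLinearMap).hasFDerivAt (x := 0) |>.add_const d
  have hsigma : futakiSigma n c d lam = fun X =>
      ((-(c / n) • lam.toContinuousLinearMap) X + d) * futakiPhi n c X +
        d / n * fderiv 𝕜 (futakiPhi n c) X X := by
    ext X
    simp only [futakiSigma, sum_mul_map_single, FunLike.coe_smul, Pi.smul_apply,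
      LinearMap.coe_toContinuousLinearMap', smul_eq_mul]
    ring
  rw [hsigma]
  refine ((hlinear.mul hphi.differentiableAt.hasFDerivAt).add
    (heuler.const_mul (d / n))).congr_fderiv ?_
  ext v
  simp only [futakiPhi_zero, map_zero, zero_add, FunLike.coe_add, FunLike.coe_smul, Pi.add_apply,
    Pi.smul_apply, smul_eq_mul]
  ring

lemma fderiv_futakiSigma_zero {n : ℕ} (hn : n ≠ 0) (c d : 𝕜) (lam : (ι → 𝕜) →ₗ[𝕜] 𝕜)
    (v : ι → 𝕜) :
    fderiv 𝕜 (futakiSigma n c d lam) 0 v = -(c * lam v) / n + d * c / n * ∑ i, v i := by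
  have hn0 : (n : 𝕜) ≠ 0 := mod_cast hn
  have hn1 : (n : 𝕜) + 1 ≠ 0 := mod_cast n.succ_ne_zero
  rw [(hasFDerivAt_futakiSigma_zero n c d lam).fderiv]
  simp only [FunLike.coe_add, FunLike.coe_smul, Pi.add_apply, Pi.smul_apply, smul_eq_mul,
    LinearMap.coe_toContinuousLinearMap', fderiv_futakiPhi_zero]
  field_simp

theorem futaki_invariant_hypersurface_general {n : ℕ} (hn : n ≠ 0) {d : 𝕜} (hd : d ≠ 0)
    (lam : (ι → 𝕜) →ₗ[𝕜] 𝕜) :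
    let c : 𝕜 := n - d + 1
    let σ : (ι → 𝕜) → 𝕜 := futakiSigma n c d lam
    σ 0 = d ∧
    (∀ i, fderiv 𝕜 σ 0 (Pi.single i 1) = -(c * lam (Pi.single i 1)) / n + d * c / n) ∧
    (∀ (v : ι → 𝕜) (κ : 𝕜), ∑ i, v i = 0 → lam v = κ →
      -c ^ (n - 1) * d * (κ + ∑ i, v i * fderiv 𝕜 σ 0 (Pi.single i 1) / σ 0) =
        -c ^ (n - 1) * ((n + 1) * (d - 1) / n) * κ) := by
  intro c σ
  have hσ0 : σ 0 = d := futakiSigma_zero n c d lam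
  have hσ' := fderiv_futakiSigma_zero hn c d lam
  refine ⟨hσ0, fun i => by simp [σ, hσ'], fun v κ hv hκ => ?_⟩
  have hn0 : (n : 𝕜) ≠ 0 := mod_cast hn
  have hsum : ∑ i, v i * fderiv 𝕜 σ 0 (Pi.single i 1) / σ 0 = -(c * κ) / n / d := by
    rw [← Finset.sum_div, sum_mul_map_single, hσ0, hσ', hv, hκ, mul_zero, add_zero]
  have hfactor : d * (κ + -(c * κ) / n / d) = (n + 1) * (d - 1) / n * κ := by
    simp only [c]
    field_simp
    ring
  rw [hsum, mul_assoc, hfactor, ← mul_assoc]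

end Futaki

/-- The algebraic computation at `X = 0` proving the Corollary of the paper (the value of the
classical Futaki invariant of a degree-`d` hypersurface of `ℂP^n`): with
`φ(X) = Σ_k (n!(n-d+1)^k/(n+k)!) Σ_{|α|=k} X^α`, `λ : ℂ^{n+1} → ℂ` linear, and
`σ(X) = (-(n-d+1)λ(X)/n + d)φ(X) + (d/n) Σ_i X^i ∂φ/∂X^i(X)`, one has `σ(0) = d`,
`∂σ/∂X^i(0) = -(n-d+1)λ(e_i)/n + d(n-d+1)/n`, and consequently for every `v` with
`Σ_i v^i = 0` and `λ(v) = κ`,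
`-(n-d+1)^{n-1} d (κ + Σ_i v^i ∂σ/∂X^i(0)/σ(0)) = -(n-d+1)^{n-1} ((n+1)(d-1)/n) κ`. -/
theorem futaki_invariant_hypersurface (n d : ℕ) (hn : 1 ≤ n) (hd : 1 ≤ d)
    (lam : (Fin (n + 1) → ℂ) →ₗ[ℂ] ℂ) :
    let c : ℂ := (n : ℂ) - (d : ℂ) + 1
    let φ : (Fin (n + 1) → ℂ) → ℂ := fun X =>
      ∑' k : ℕ, ((Nat.factorial n : ℂ) * c ^ k / (Nat.factorial (n + k) : ℂ)) *
        ∑ α ∈ Finset.Nat.antidiagonalTuple (n + 1) k, ∏ i, X i ^ α i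
    let σ : (Fin (n + 1) → ℂ) → ℂ := fun X =>
      (-(c * lam X) / (n : ℂ) + (d : ℂ)) * φ X +
        ((d : ℂ) / (n : ℂ)) * ∑ i, X i * fderiv ℂ φ X (Pi.single i 1)
    σ 0 = (d : ℂ) ∧
    (∀ i : Fin (n + 1),
      fderiv ℂ σ 0 (Pi.single i 1) =
        -(c * lam (Pi.single i 1)) / (n : ℂ) + (d : ℂ) * c / (n : ℂ)) ∧
    (∀ (v : Fin (n + 1) → ℂ) (κ : ℂ), ∑ i, v i = 0 → lam v = κ →
      -c ^ (n - 1) * (d : ℂ) *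
          (κ + ∑ i, v i * fderiv ℂ σ 0 (Pi.single i 1) / σ 0) =
        -c ^ (n - 1) * (((n : ℂ) + 1) * ((d : ℂ) - 1) / (n : ℂ)) * κ) := by
  intro c φ σ
  have hσ : futakiSigma n c d lam = σ :=
    funext fun X => by simp only [futakiSigma, futakiPhi_fin, σ, φ]
  exact hσ ▸ futaki_invariant_hypersurface_general (by lia) (Nat.cast_ne_zero.2 (by lia)) lam
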